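/- Let S be the monoid with zero presented by generators x_1, x_2, …, y_1, y_2, … and relations x_i y_i = 0 for all i. There is no topology τ on S that is T1, makes the multiplication map S × S → S continuous, and is coarser than the semigroup Zariski topology Zar⁺(S) (i.e., with every τ-open set Zar⁺(S)-open). -/

import Mathlib

/-! The sequences `x_i` and `y_i` both converge to *every* point of `S` in the Zariski topology.
To see this, fix a letter `g`, let `k` be its partner (`x_i ↔ y_i`) and let `m : S`. The
substitution `g ↦ m`, `k ↦ 0`, all other letters fixed, respects the relations, hence is an
endomorphism of `S` (`subst g m`). If `g` and `k` do not occur in the chosen representatives of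
the coefficients of `W`, it sends `W(g)` to `W(m)` (`eventually_subst_eval`). So an equation
`W = V` satisfied by a letter foreign to both sides is satisfied by every `m`; thus a nonempty
subbasic open set contains all but finitely many letters.

If `τ` is coarser than the Zariski topology, then `x_i → 1` and `y_i → 1` in `τ`, so continuity of
the multiplication gives `0 = x_i y_i → 1`, which in a `T1` space forces `0 = 1`. This fails
in `S`, as the homomorphism `S → ℕ` killing every letter shows. -/

/-- Evaluation of an element of `G * ⟨x⟩` (the free product of a group `G` with an
infinite cyclic group) at an element `g : G`, substituting `g` for `x`. -/
noncomputable def groupEval {G : Type*} [Group G] (g : G) :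
    Monoid.Coprod G (Multiplicative ℤ) →* G :=
  Monoid.Coprod.lift (MonoidHom.id G) (zpowersHom G g)

/-- Evaluation of an element of `M * ⟨x⟩⁺` (the free product of a monoid `M` with the free
monogenic monoid) at an element `m : M`, substituting `m` for `x`. -/
noncomputable def monoidEval {M : Type*} [Monoid M] (m : M) :
    Monoid.Coprod M (Multiplicative ℕ) →* M :=
  Monoid.Coprod.lift (MonoidHom.id M) (powersHom M m)

/-- The group Zariski topology `Zar(G)`. -/
noncomputable def zariskiGroup (G : Type*) [Group G] : TopologicalSpace G :=
  TopologicalSpace.generateFrom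
    {s | ∃ W : Monoid.Coprod G (Multiplicative ℤ), s = {g : G | groupEval g W ≠ 1}}

/-- The semigroup Zariski topology `Zar⁺(M)`. -/
noncomputable def zariskiSemigroup (M : Type*) [Monoid M] : TopologicalSpace M :=
  TopologicalSpace.generateFrom
    {s | ∃ W V : Monoid.Coprod M (Multiplicative ℕ),
      s = {m : M | monoidEval m W ≠ monoidEval m V}}


/-- The base monoid with zero: `WithZero (FreeMonoid (ℕ ⊕ ℕ))`, whose nonzero elements are
words in the generators `x_i` (left copy of `ℕ`) and `y_i` (right copy of `ℕ`). -/
abbrev BaseS : Type := WithZero (FreeMonoid (ℕ ⊕ ℕ))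

/-- The generator `x_i` in the base monoid. -/
def xBase (i : ℕ) : BaseS := ↑(FreeMonoid.of (Sum.inl i : ℕ ⊕ ℕ))

/-- The generator `y_i` in the base monoid. -/
def yBase (i : ℕ) : BaseS := ↑(FreeMonoid.of (Sum.inr i : ℕ ⊕ ℕ))

/-- The defining relations: `x_i · y_i = 0` for every `i`. -/
def xyRel : BaseS → BaseS → Prop := fun a b =>
  ∃ i : ℕ, a = xBase i * yBase i ∧ b = 0

/-- The monoid congruence generated by the relations `x_i · y_i = 0`. -/
def Scon : Con BaseS := conGen xyRel

/-- The monoid `S = ⟨x_1, x_2, …, y_1, y_2, … ∣ x_i y_i = 0⟩`. -/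
abbrev Smon : Type := Scon.Quotient

/-- The image of the generator `x_i` in `S`. -/
def xS (i : ℕ) : Smon := Scon.mk' (xBase i)

/-- The image of the generator `y_i` in `S`. -/
def yS (i : ℕ) : Smon := Scon.mk' (yBase i)

/-- The image of the zero element in `S`. -/
def zS : Smon := Scon.mk' 0

/-- `S` as a monoid with zero, extending its quotient monoid structure. It is an
instance only locally, so that the theorem itself refers to the quotient structure. -/
@[reducible] def monoidWithZeroSmon : MonoidWithZero Smon :=
  { (inferInstance : Monoid Smon) with
    zero := zS
    zero_mul := fun a => by
      induction a using Con.induction_on with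
      | H b => exact congrArg Scon.mk' (zero_mul b)
    mul_zero := fun a => by
      induction a using Con.induction_on with
      | H b => exact congrArg Scon.mk' (mul_zero b) }

section
attribute [local instance] monoidWithZeroSmon

/-- The image in `S` of a letter, `x_i` for `inl i` and `y_i` for `inr i`. -/
def letterS (g : ℕ ⊕ ℕ) : Smon := Scon.mk' (↑(FreeMonoid.of g) : BaseS)

lemma letterS_mul (i : ℕ) : letterS (Sum.inl i) * letterS (Sum.inr i) = zS :=
  (Con.eq Scon).2 (ConGen.Rel.of _ _ ⟨i, rfl, rfl⟩)

/-- The universal property of `S` among monoids with zero. -/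
noncomputable def liftS {M : Type*} [MonoidWithZero M] (f : ℕ ⊕ ℕ → M)
    (hf : ∀ i, f (Sum.inl i) * f (Sum.inr i) = 0) : Smon →* M :=
  Scon.lift (WithZero.lift' (FreeMonoid.lift f) : BaseS →*₀ M).toMonoidHom <| by
    refine Con.conGen_le.2 ?_
    rintro a b ⟨i, rfl, rfl⟩
    change WithZero.lift' (FreeMonoid.lift f) (xBase i * yBase i)
      = WithZero.lift' (FreeMonoid.lift f) 0
    rw [map_mul, map_zero, xBase, yBase, WithZero.lift'_coe, WithZero.lift'_coe,
      FreeMonoid.lift_eval_of, FreeMonoid.lift_eval_of, hf]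

lemma liftS_letter {M : Type*} [MonoidWithZero M] (f : ℕ ⊕ ℕ → M)
    (hf : ∀ i, f (Sum.inl i) * f (Sum.inr i) = 0) (g : ℕ ⊕ ℕ) :
    liftS f hf (letterS g) = f g := by
  change WithZero.lift' (FreeMonoid.lift f) (↑(FreeMonoid.of g) : BaseS) = f g
  rw [WithZero.lift'_coe, FreeMonoid.lift_eval_of]

lemma liftS_zero {M : Type*} [MonoidWithZero M] (f : ℕ ⊕ ℕ → M)
    (hf : ∀ i, f (Sum.inl i) * f (Sum.inr i) = 0) : liftS f hf 0 = 0 :=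
  map_zero (WithZero.lift' (FreeMonoid.lift f) : BaseS →*₀ M)

lemma zS_ne_one : zS ≠ 1 := by
  intro h
  have hmap := congrArg (liftS (fun _ => (0 : ℕ)) (fun _ => rfl)) h
  rw [map_one] at hmap
  exact zero_ne_one ((liftS_zero _ _).symm.trans hmap)

/-- The endomorphism of `S` that sends the letter `g` to `m` and its partner to `0`, and fixes
all other letters. -/
noncomputable def subst (g : ℕ ⊕ ℕ) (m : Smon) : Smon →* Smon :=
  liftS (fun k => if k = g then m else if k = g.swap then 0 else letterS k) <| by
    intro i
    rcases g with j | j <;> by_cases h : i = j <;> simp [h]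
    all_goals exact letterS_mul i

lemma subst_self (g : ℕ ⊕ ℕ) (m : Smon) : subst g m (letterS g) = m := by
  rw [subst, liftS_letter, if_pos rfl]

/-- Only finitely many letters, together with their partners, occur in a representative of `c`. -/
lemma eventually_subst_coeff (c : Smon) :
    ∀ᶠ g in Filter.cofinite, ∀ m, subst g m c = c := by
  induction c using Con.induction_on with
  | H b =>
    induction b using WithZero.recZeroCoe with
    | zero => exact Filter.Eventually.of_forall fun g m => liftS_zero _ _
    | coe w =>
      induction w using FreeMonoid.inductionOn' with
      | one => exact Filter.Eventually.of_forall fun g m => map_one _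
      | of_mul k w ih =>
        filter_upwards [ih, (Set.finite_singleton k).compl_mem_cofinite,
          (Set.finite_singleton k.swap).compl_mem_cofinite] with g hg h1 h2 m
        have hkg : k ≠ g := fun h => h1 h.symm
        have hks : k ≠ g.swap := fun h => h2 (by simp [h])
        have hk : subst g m (letterS k) = letterS k := by
          rw [subst, liftS_letter, if_neg hkg, if_neg hks]
        change subst g m (letterS k * Scon.mk' (w : BaseS)) = letterS k * Scon.mk' (w : BaseS)
        rw [map_mul, hk]
        exact congrArg _ (hg m)

lemma eventually_subst_eval (W : Monoid.Coprod Smon (Multiplicative ℕ)) :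
    ∀ᶠ g in Filter.cofinite, ∀ m,
      subst g m (monoidEval (letterS g) W) = monoidEval m W := by
  induction W using Monoid.Coprod.induction_on with
  | inl c =>
    filter_upwards [eventually_subst_coeff c] with g hg m
    simpa [monoidEval] using hg m
  | inr n =>
    refine Filter.Eventually.of_forall fun g m => ?_
    simp [monoidEval, powersHom_apply, subst_self]
  | mul W V hW hV =>
    filter_upwards [hW, hV] with g h1 h2 m
    rw [map_mul, map_mul, map_mul, h1, h2]

/-- In the Zariski topology the letters, in any enumeration, converge to every point of `S`. -/
lemma tendsto_letter_zariski (a : Smon) :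
    Filter.Tendsto letterS Filter.cofinite (@nhds Smon (zariskiSemigroup Smon) a) := by
  rw [zariskiSemigroup, TopologicalSpace.tendsto_nhds_generateFrom_iff]
  rintro s ⟨W, V, rfl⟩ ha
  filter_upwards [eventually_subst_eval W, eventually_subst_eval V] with g hW hV heq
  exact ha (by rw [← hW a, ← hV a, heq])

end

/-- There is no `T1` topology on `S` making multiplication continuous that is coarser than
the semigroup Zariski topology `Zar⁺(S)`. -/
theorem no_T1_semigroup_topology_coarser_than_zariski :
    ¬ ∃ τ : TopologicalSpace Smon, @T1Space Smon τ ∧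
        (@Continuous (Smon × Smon) Smon (@instTopologicalSpaceProd Smon Smon τ τ) τ
          (fun p : Smon × Smon => p.1 * p.2)) ∧
        (∀ s : Set Smon, τ.IsOpen s → (zariskiSemigroup Smon).IsOpen s) := by
  rintro ⟨τ, hT1, hmul, hle⟩
  have hlim (a : Smon) : Filter.Tendsto letterS Filter.cofinite (@nhds Smon τ a) :=
    (tendsto_letter_zariski a).mono_right (nhds_mono hle)
  have hx := (hlim 1).comp (Sum.inl_injective (α := ℕ) (β := ℕ)).tendsto_cofinite
  have hy := (hlim 1).comp (Sum.inr_injective (α := ℕ) (β := ℕ)).tendsto_cofinite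
  have hxy := (hmul.tendsto ((1 : Smon), (1 : Smon))).comp (hx.prodMk_nhds hy)
  have hconst : Filter.Tendsto (fun _ : ℕ => zS) Filter.cofinite (nhds 1) := by
    rw [← one_mul (1 : Smon)]
    exact hxy.congr letterS_mul
  exact zS_ne_one (tendsto_const_nhds_iff.1 hconst)
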